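/- arXiv:math/0112163 — 3 statements merged into one kernel-verified Lean document; each statement's English description precedes it below -/
import Mathlib

section
/- Let V : ℝ → ℝ be smooth and let γ = (y, ν, μ) : I → ℝ³ be an integral curve of W on an interval I, i.e. γ′(t) = W(γ(t)) = (2μ(t), 2μ(t)², −(V′(y(t)) + 2ν(t)μ(t))). Then: (a) p∘γ is constant on I, i.e. W is tangent to each level surface Σ(λ) of p; (b) (ν∘γ)′(t) = 2μ(t)² ≥ 0, so ν is nondecreasing along every integral curve of W; (c) if ν∘γ is constant on some nontrivial subinterval, then γ is constant there, equal to a zero q of W (so that μ = 0 and V′(y) = 0 at q); in particular W has no nonconstant periodic integral curves. -/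
theorem aux_const (I : Set ℝ) (hI : I.OrdConnected) (f : ℝ → ℝ)
    (hf : ∀ t ∈ I, HasDerivAt f 0 t) : ∀ s ∈ I, ∀ t ∈ I, f s = f t := by
  intro s hs t ht
  have h := Convex.norm_image_sub_le_of_norm_hasDerivWithin_le (C := 0) (f' := fun _ => (0 : ℝ))
    (fun x hx => (hf x hx).hasDerivWithinAt) (fun x _ => by simp) hI.convex ht hs
  rw [zero_mul] at h
  exact sub_eq_zero.mp (norm_le_zero_iff.mp h)

theorem aux_zero (a b : ℝ) (hab : a < b) (f : ℝ → ℝ) (k c s : ℝ) (hs : s ∈ Set.Icc a b)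
    (hk : ∀ s ∈ Set.Icc a b, f s = k) (hf : HasDerivAt f c s) : c = 0 := by
  have h0 : HasDerivWithinAt f 0 (Set.Icc a b) s :=
    (hasDerivWithinAt_const s (Set.Icc a b) k).congr hk (hk s hs)
  exact (uniqueDiffOn_Icc hab s hs).eq_deriv _ hf.hasDerivWithinAt h0

/-- along any integral curve of
`W(y,ν,μ) = (2μ, 2μ², −(V′(y) + 2νμ))` the energy `p = ν² + μ² + V(y)` is
conserved, `ν` is nondecreasing, and if `ν` is constant on a nontrivial
subinterval then the curve is constant there, equal to a zero of `W`; in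
particular `W` has no nonconstant periodic integral curves. -/
theorem stmt_4 (V : ℝ → ℝ) (hV : ContDiff ℝ (⊤ : ℕ∞) V)
    (I : Set ℝ) (hI : I.OrdConnected)
    (y ν μ : ℝ → ℝ)
    (hy : ∀ t ∈ I, HasDerivAt y (2 * μ t) t)
    (hν : ∀ t ∈ I, HasDerivAt ν (2 * μ t ^ 2) t)
    (hμ : ∀ t ∈ I, HasDerivAt μ (-(deriv V (y t) + 2 * ν t * μ t)) t) :
    (∀ s ∈ I, ∀ t ∈ I,
        ν s ^ 2 + μ s ^ 2 + V (y s) = ν t ^ 2 + μ t ^ 2 + V (y t)) ∧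
    MonotoneOn ν I ∧
    (∀ t₁ ∈ I, ∀ t₂ ∈ I, t₁ < t₂ → (∀ s ∈ Set.Icc t₁ t₂, ν s = ν t₁) →
      ∀ s ∈ Set.Icc t₁ t₂,
        y s = y t₁ ∧ ν s = ν t₁ ∧ μ s = μ t₁ ∧ μ s = 0 ∧ deriv V (y s) = 0) ∧
    (I = Set.univ → ∀ T > (0 : ℝ),
      (∀ t, y (t + T) = y t ∧ ν (t + T) = ν t ∧ μ (t + T) = μ t) →
      ∀ s t : ℝ, y s = y t ∧ ν s = ν t ∧ μ s = μ t) := by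
  have hmono : MonotoneOn ν I := by
    apply monotoneOn_of_deriv_nonneg hI.convex
    · exact fun t ht => (hν t ht).continuousAt.continuousWithinAt
    · exact fun t ht => (hν t (interior_subset ht)).differentiableAt.differentiableWithinAt
    · intro t ht
      rw [(hν t (interior_subset ht)).deriv]
      positivity
  have hc : ∀ t₁ ∈ I, ∀ t₂ ∈ I, t₁ < t₂ → (∀ s ∈ Set.Icc t₁ t₂, ν s = ν t₁) →
      ∀ s ∈ Set.Icc t₁ t₂,
        y s = y t₁ ∧ ν s = ν t₁ ∧ μ s = μ t₁ ∧ μ s = 0 ∧ deriv V (y s) = 0 := by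
    intro a ha b hb hab hk s hs
    have hsub : Set.Icc a b ⊆ I := hI.out ha hb
    have ha' : a ∈ Set.Icc a b := ⟨le_rfl, hab.le⟩
    have hm : ∀ r ∈ Set.Icc a b, μ r = 0 := by
      intro r hr
      have := aux_zero a b hab ν _ _ r hr hk (hν r (hsub hr))
      simpa using this
    have hd := aux_zero a b hab μ _ _ s hs hm (hμ s (hsub hs))
    rw [hm s hs] at hd
    refine ⟨?_, hk s hs, by rw [hm s hs, hm a ha'], hm s hs, by linarith⟩
    refine aux_const (Set.Icc a b) Set.ordConnected_Icc y ?_ s hs a ha'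
    intro r hr
    have := hy r (hsub hr)
    rwa [hm r hr, mul_zero] at this
  refine ⟨?_, hmono, hc, ?_⟩
  · refine aux_const I hI (fun t => ν t ^ 2 + μ t ^ 2 + V (y t)) ?_
    intro t ht
    have hVd : HasDerivAt V (deriv V (y t)) (y t) :=
      ((hV.differentiable (by simp)) (y t)).hasDerivAt
    have h := (((hν t ht).pow 2).add ((hμ t ht).pow 2)).add (hVd.comp t (hy t ht))
    refine h.congr_deriv ?_
    simp
    ring
  · rintro rfl T hT hper
    have key : ∀ s t : ℝ, s ≤ t → y s = y t ∧ ν s = ν t ∧ μ s = μ t := by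
      intro s t hst
      have hn : ∀ n : ℕ, ν (s + n * T) = ν s := by
        intro n
        induction n with
        | zero => simp
        | succ k ih =>
          rw [← ih, ← (hper (s + k * T)).2.1]
          congr 1
          push_cast
          ring
      obtain ⟨n, hn'⟩ := exists_nat_gt ((t - s) / T)
      rw [div_lt_iff₀ hT] at hn'
      have h := hc s trivial (s + n * T) trivial (by linarith) (fun r hr =>
        le_antisymm ((hmono trivial trivial hr.2).trans_eq (hn n)) (hmono trivial trivial hr.1))
        t ⟨hst, by linarith⟩
      exact ⟨h.1.symm, h.2.1.symm, h.2.2.1.symm⟩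
    intro s t
    rcases le_total s t with h | h
    · exact key s t h
    · obtain ⟨h1, h2, h3⟩ := key t s h
      exact ⟨h1.symm, h2.symm, h3.symm⟩
end

section
/- Let r₁ < 0, let n ≥ 0 be an integer, let x₀ > 0, y₀ > 0, and U = (0, x₀] × [−y₀, y₀]. Let v : U → ℂ be smooth and set f(x, y) = x ∂_x v(x, y) + r₁ y ∂_y v(x, y). Suppose there exist C ≥ 0, ρ > −(n−1)r₁ and s > −n r₁ such that |∂_y^k v(x, y)| ≤ C x^ρ and |∂_y^k f(x, y)| ≤ C x^s for all (x, y) ∈ U and all 0 ≤ k ≤ n + 1. Then there exists a constant a_n ∈ ℂ such that for every r′ < min(−(n+1)r₁, s) there is C′ ≥ 0 with |v(x, y) − a_n x^{−n r₁} y^n| ≤ C′ x^{r′} for all (x, y) ∈ U. -/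
open Set MeasureTheory Filter Topology

lemma aux_taylor (g : ℝ → ℂ) (hg : ContDiff ℝ (⊤ : ℕ∞) g) (n : ℕ) (M y₀ : ℝ) 
    (hM : ∀ y ∈ Icc (-y₀) y₀, ‖iteratedDeriv (n+1) g y‖ ≤ M) (η : ℝ) (hη : |η| ≤ y₀) :
    ‖g η - ∑ k ∈ Finset.range (n+1), ((η ^ k : ℝ) : ℂ) * (iteratedDeriv k g 0 / (k.factorial : ℂ))‖
      ≤ M * |η| ^ (n+1) := by
  have hgn : ∀ m : ℕ, ContDiff ℝ m g := fun m => hg.of_le (by exact_mod_cast le_top)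
  have hG : ∀ m : ℕ, ContDiff ℝ m (fun u : ℝ => g (η * u)) := fun m =>
    (hgn m).comp (contDiff_const.mul contDiff_id)
  have hit : ∀ m : ℕ, ∀ u ∈ Icc (0:ℝ) 1, iteratedDerivWithin m (fun u : ℝ => g (η * u)) (Icc 0 1) u
      = (η ^ m) • iteratedDeriv m g (η * u) := by
    intro m u hu
    rw [iteratedDerivWithin_eq_iteratedDeriv (uniqueDiffOn_Icc one_pos) (hG m).contDiffAt hu]
    rw [iteratedDeriv_comp_const_smul (hgn m)]
  have h0 : (0:ℝ) ∈ Icc (0:ℝ) 1 := by simp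
  have key := taylor_mean_remainder_bound (f := fun u : ℝ => g (η * u)) (a := 0) (b := 1) (x := 1)
    (n := n) (C := |η|^(n+1) * M) zero_le_one (by exact_mod_cast (hG (n+1)).contDiffOn) (by simp)
    (by
      intro u hu
      rw [hit _ u hu, norm_smul, norm_pow, Real.norm_eq_abs]
      apply mul_le_mul_of_nonneg_left _ (by positivity)
      apply hM
      rw [mem_Icc, ← abs_le, abs_mul, abs_of_nonneg hu.1]
      nlinarith [hu.2, abs_nonneg η])
  rw [taylor_within_apply] at key
  have hM0 : 0 ≤ M := (norm_nonneg _).trans (hM 0 (by constructor <;> linarith [abs_nonneg η]))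
  have hs : ∑ k ∈ Finset.range (n + 1), (((k.factorial : ℝ))⁻¹ * (1 - 0) ^ k) •
      iteratedDerivWithin k (fun u : ℝ => g (η * u)) (Icc 0 1) 0 = 
      ∑ k ∈ Finset.range (n+1), ((η ^ k : ℝ) : ℂ) * (iteratedDeriv k g 0 / (k.factorial : ℂ)) := by
    apply Finset.sum_congr rfl
    intro k _
    rw [hit k 0 h0]
    simp only [Complex.real_smul, mul_zero, sub_zero, one_pow, mul_one]
    push_cast
    field_simp
  rw [hs] at key
  simp only [mul_one] at key
  refine key.trans ?_
  rw [sub_zero, one_pow, mul_one, mul_comm M]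
  apply div_le_self (by positivity)
  exact_mod_cast Nat.succ_le_of_lt (Nat.factorial_pos n)

lemma aux_poly (n : ℕ) : ∀ (b : ℕ → ℂ) (e K z₁ : ℝ), (n : ℝ) - 1 < e → 0 < z₁ →
    (∀ z ∈ Ioc 0 z₁, ‖∑ k ∈ Finset.range n, b k * ((z ^ k : ℝ) : ℂ)‖ ≤ K * z ^ e) →
    ∀ k < n, b k = 0 := by
  induction n with
  | zero => intro b e K z₁ _ _ _ k hk; omega
  | succ n ih =>
    intro b e K z₁ he hz h
    push_cast at he
    have hev : ∀ᶠ z in 𝓝[>] (0:ℝ), z ∈ Ioc 0 z₁ := Ioc_mem_nhdsGT hz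
    have he0 : 0 < e := by have : (0:ℝ) ≤ n := n.cast_nonneg
                           linarith
    have h1 : Tendsto (fun z : ℝ => ∑ k ∈ Finset.range (n+1), b k * ((z ^ k : ℝ) : ℂ)) (𝓝[>] 0) (𝓝 0) := by
      apply squeeze_zero_norm' (hev.mono h)
      have : Tendsto (fun z : ℝ => K * z ^ e) (𝓝 0) (𝓝 (K * 0 ^ e)) :=
        (Real.continuousAt_rpow_const 0 e (Or.inr he0.le)).tendsto.const_mul K
      rw [Real.zero_rpow he0.ne', mul_zero] at this
      exact this.mono_left nhdsWithin_le_nhds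
    have h2 : Tendsto (fun z : ℝ => ∑ k ∈ Finset.range (n+1), b k * ((z ^ k : ℝ) : ℂ)) (𝓝[>] 0) (𝓝 (b 0)) := by
      have hc : Continuous (fun z : ℝ => ∑ k ∈ Finset.range (n+1), b k * ((z ^ k : ℝ) : ℂ)) := by fun_prop
      have := hc.tendsto 0
      rw [Finset.sum_range_succ'] at this
      simp at this
      refine Tendsto.mono_left ?_ nhdsWithin_le_nhds
      convert this using 2
      simp
    have hb0 : b 0 = 0 := tendsto_nhds_unique h2 h1
    have := ih (fun k => b (k+1)) (e-1) K z₁ (by linarith) hz (by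
      intro z hzz
      have hh := h z hzz
      rw [Finset.sum_range_succ', hb0, zero_mul, add_zero] at hh
      have : ∑ k ∈ Finset.range n, b (k+1) * ((z ^ (k+1) : ℝ) : ℂ) 
          = (z:ℂ) * ∑ k ∈ Finset.range n, b (k+1) * ((z ^ k : ℝ) : ℂ) := by
        rw [Finset.mul_sum]; apply Finset.sum_congr rfl; intro k _; push_cast; ring
      rw [this, norm_mul, Complex.norm_real, Real.norm_eq_abs, abs_of_pos hzz.1] at hh
      rw [Real.rpow_sub_one hzz.1.ne', ← mul_div_assoc, le_div_iff₀ hzz.1]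
      linarith)
    intro k hk
    cases k with
    | zero => exact hb0
    | succ k => exact this k (by omega)

lemma aux_meas (F : ℝ → ℝ → ℂ) (c : ℕ → ℝ → ℂ) (n : ℕ) (S : Set ℝ) (hS : MeasurableSet S) (y₀ : ℝ)
    (hy : 0 < y₀) (M : ℝ → ℝ)
    (hF : ∀ y, |y| ≤ y₀ → ContinuousOn (fun t => F t y) S)
    (hT : ∀ k ≤ n, ∀ t ∈ S, ∀ η, |η| ≤ y₀ → 
      ‖F t η - ∑ j ∈ Finset.range (k+1), ((η ^ j : ℝ) : ℂ) * c j t‖ ≤ M t * |η| ^ (k+1)) :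
    ∀ k ≤ n, AEStronglyMeasurable (c k) (volume.restrict S) := by
  intro k
  induction k using Nat.strong_induction_on with
  | _ k ih =>
  intro hk
  let η : ℕ → ℝ := fun m => y₀ / ((m:ℝ) + 1)
  have hη0 : ∀ m, 0 < η m := fun m => by positivity
  have hηy : ∀ m, |η m| ≤ y₀ := fun m => by
    rw [abs_of_pos (hη0 m)]
    exact div_le_self hy.le (by linarith [(m.cast_nonneg : (0:ℝ) ≤ m)])
  have hηt : Tendsto η atTop (𝓝 0) := by
    have := (tendsto_one_div_add_atTop_nhds_zero_nat (𝕜 := ℝ)).const_mul y₀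
    simpa [η, div_eq_mul_inv] using this
  apply aestronglyMeasurable_of_tendsto_ae (u := atTop) (f := fun m t => 
    (F t (η m) - ∑ j ∈ Finset.range k, ((η m ^ j : ℝ) : ℂ) * c j t) * (((η m)^k : ℝ) : ℂ)⁻¹)
  · intro m
    refine AEStronglyMeasurable.mul_const (AEStronglyMeasurable.sub ((hF _ (hηy m)).aestronglyMeasurable hS) ?_) _
    apply Finset.aestronglyMeasurable_fun_sum
    intro j hj
    have := Finset.mem_range.1 hj
    exact (ih j this (by omega)).const_mul _
  · filter_upwards [ae_restrict_mem hS] with t ht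
    rw [tendsto_iff_norm_sub_tendsto_zero]
    apply squeeze_zero (fun _ => norm_nonneg _) (g := fun m => M t * η m)
    · intro m
      have h := hT k hk t ht (η m) (hηy m)
      have hp : (0:ℝ) < η m ^ k := pow_pos (hη0 m) k
      have hpc : ((η m ^ k : ℝ) : ℂ) ≠ 0 := by exact_mod_cast hp.ne'
      rw [Finset.sum_range_succ] at h
      have e : (F t (η m) - ∑ j ∈ Finset.range k, ((η m ^ j : ℝ) : ℂ) * c j t) * (((η m)^k : ℝ) : ℂ)⁻¹ - c k t
        = (F t (η m) - (∑ j ∈ Finset.range k, ((η m ^ j : ℝ) : ℂ) * c j t + ((η m ^ k : ℝ) : ℂ) * c k t)) * (((η m)^k : ℝ) : ℂ)⁻¹ := by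
        field_simp; ring
      rw [e, norm_mul, norm_inv, Complex.norm_real, Real.norm_eq_abs, abs_of_pos hp, ← div_eq_mul_inv, div_le_iff₀ hp]
      rw [abs_of_pos (hη0 m), pow_succ] at h
      linarith
    · simpa using hηt.const_mul (M t)

lemma aux_rpow_le {x x₀ q r : ℝ} (hx : x ∈ Ioc 0 x₀) (h : r ≤ q) : x ^ q ≤ x₀ ^ (q - r) * x ^ r := by
  have : x ^ q = x ^ (q - r) * x ^ r := by rw [← Real.rpow_add hx.1]; congr 1; ring
  rw [this]
  exact mul_le_mul_of_nonneg_right (Real.rpow_le_rpow hx.1.le hx.2 (by linarith))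
    (Real.rpow_nonneg hx.1.le _)

lemma aux_expand (r₁ : ℝ) (n : ℕ) (x₀ y₀ : ℝ) (hr : r₁ < 0) (hx₀ : 0 < x₀) (hy : 0 < y₀)
    (V F : ℝ → ℝ → ℂ) (c : ℕ → ℝ → ℂ) (d : ℕ → ℂ) (C D s : ℝ) (hC : 0 ≤ C) (hD : 0 ≤ D)
    (hs : -(n : ℝ) * r₁ < s)
    (hcm : ∀ k ≤ n, AEStronglyMeasurable (c k) (volume.restrict (Ioc 0 x₀)))
    (hcb : ∀ k ≤ n, ∀ t ∈ Ioc 0 x₀, ‖c k t‖ ≤ C * t ^ s)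
    (hFT : ∀ t ∈ Ioc 0 x₀, ∀ η, |η| ≤ y₀ →
      ‖F t η - ∑ k ∈ Finset.range (n+1), ((η ^ k : ℝ) : ℂ) * c k t‖ ≤ C * t ^ s * |η| ^ (n+1))
    (hVT : ∀ η, |η| ≤ y₀ →
      ‖V x₀ η - ∑ k ∈ Finset.range (n+1), ((η ^ k : ℝ) : ℂ) * d k‖ ≤ D * |η| ^ (n+1))
    (hint : ∀ x ∈ Ioc 0 x₀, ∀ y, |y| ≤ y₀ → IntervalIntegrable
      (fun t => ((t⁻¹ : ℝ) : ℂ) * F t (y * x ^ (-r₁) * t ^ r₁)) volume x x₀)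
    (hftc : ∀ x ∈ Ioc 0 x₀, ∀ y, |y| ≤ y₀ →
      ∫ t in x..x₀, ((t⁻¹ : ℝ) : ℂ) * F t (y * x ^ (-r₁) * t ^ r₁)
        = V x₀ (y * x ^ (-r₁) * x₀ ^ r₁) - V x y) :
    ∃ a : ℕ → ℂ, ∀ r', r' < -((n : ℝ) + 1) * r₁ → r' < s → ∃ C' : ℝ, 0 ≤ C' ∧
      ∀ x ∈ Ioc 0 x₀, ∀ y, |y| ≤ y₀ →
        ‖V x y - ∑ k ∈ Finset.range (n+1), a k * (((y * x ^ (-r₁)) ^ k : ℝ) : ℂ)‖ ≤ C' * x ^ r' := by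
  let h : ℕ → ℝ → ℂ := fun k t => (((t ^ r₁) ^ k * t⁻¹ : ℝ) : ℂ) * c k t
  have hsk : ∀ k ≤ n, 0 < s + k * r₁ := by
    intro k hk
    have : (k : ℝ) ≤ n := by exact_mod_cast hk
    nlinarith
  have hhb : ∀ k ≤ n, ∀ t ∈ Ioc 0 x₀, ‖h k t‖ ≤ C * t ^ (s + k * r₁ - 1) := by
    intro k hk t ht
    have ht0 := ht.1
    have e : t ^ (s + k * r₁ - 1) = (t ^ r₁) ^ k * t⁻¹ * t ^ s := by
      rw [← Real.rpow_mul_natCast ht0.le, ← Real.rpow_neg_one t, ← Real.rpow_add ht0, ← Real.rpow_add ht0]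
      congr 1; ring
    have hp : 0 ≤ (t ^ r₁) ^ k * t⁻¹ := by positivity
    simp only [h]
    rw [norm_mul, Complex.norm_real, Real.norm_eq_abs, abs_of_nonneg hp, e]
    nlinarith [mul_le_mul_of_nonneg_left (hcb k hk t ht) hp]
  have hhm : ∀ k ≤ n, AEStronglyMeasurable (h k) (volume.restrict (Ioc 0 x₀)) := by
    intro k hk
    refine AEStronglyMeasurable.mul (Measurable.aestronglyMeasurable ?_) (hcm k hk)
    fun_prop
  have hhi : ∀ k ≤ n, ∀ x ∈ Ioc 0 x₀, IntervalIntegrable (h k) volume 0 x := by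
    intro k hk x hx
    apply IntervalIntegrable.mono_fun' (g := fun t => C * t ^ (s + k * r₁ - 1))
    · exact (intervalIntegral.intervalIntegrable_rpow' (by linarith [hsk k hk])).const_mul C
    · rw [uIoc_of_le hx.1.le]
      exact (hhm k hk).mono_measure (Measure.restrict_mono (Ioc_subset_Ioc_right hx.2) le_rfl)
    · rw [uIoc_of_le hx.1.le]
      filter_upwards [ae_restrict_mem measurableSet_Ioc] with t ht
      exact hhb k hk t ⟨ht.1, ht.2.trans hx.2⟩
  have hx₀m : x₀ ∈ Ioc 0 x₀ := ⟨hx₀, le_rfl⟩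
  have hhi2 : ∀ k ≤ n, ∀ x ∈ Ioc 0 x₀, IntervalIntegrable (h k) volume x x₀ := fun k hk x hx =>
    (hhi k hk x hx).symm.trans (hhi k hk x₀ hx₀m)
  have hh0 : ∀ k ≤ n, ∀ x ∈ Ioc 0 x₀, ‖∫ t in (0:ℝ)..x, h k t‖ ≤ C * (x ^ (s + k * r₁) / (s + k * r₁)) := by
    intro k hk x hx
    have hpos := hsk k hk
    have := intervalIntegral.norm_integral_le_of_norm_le (μ := volume) (f := h k) hx.1.le
      (g := fun t => C * t ^ (s + k * r₁ - 1))
      (ae_of_all _ fun t ht => hhb k hk t ⟨ht.1, ht.2.trans hx.2⟩)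
      ((intervalIntegral.intervalIntegrable_rpow' (by linarith)).const_mul C)
    rw [intervalIntegral.integral_const_mul, integral_rpow (Or.inl (by linarith)), sub_add_cancel,
      Real.zero_rpow hpos.ne', sub_zero] at this
    exact this
  refine ⟨fun k => ((x₀ ^ r₁) ^ k : ℝ) * d k - ∫ t in (0:ℝ)..x₀, h k t, ?_⟩
  intro r' hr1 hr2
  set L : ℝ := -((n : ℝ) + 1) * r₁ with hL
  refine ⟨D * (y₀ * x₀ ^ r₁) ^ (n+1) * x₀ ^ (L - r')
    + ∑ k ∈ Finset.range (n+1), y₀ ^ k * C / (s + k * r₁) * x₀ ^ (s - r')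
    + C * y₀ ^ (n+1) * x₀ ^ (s - r') / (L - r'), ?_, ?_⟩
  · have h1 : 0 ≤ ∑ k ∈ Finset.range (n+1), y₀ ^ k * C / (s + k * r₁) * x₀ ^ (s - r') := by
      apply Finset.sum_nonneg
      intro k hk
      have := hsk k (by have := Finset.mem_range.1 hk; omega)
      positivity
    have h2 : 0 < L - r' := by linarith
    positivity
  intro x hx y hyy
  have hx0 := hx.1
  set w : ℝ := y * x ^ (-r₁) with hw
  have hwt : ∀ t ∈ Icc x x₀, |w * t ^ r₁| ≤ y₀ := by
    intro t ht
    have ht0 : 0 < t := hx0.trans_le ht.1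
    rw [hw, abs_mul, abs_mul, abs_of_pos (Real.rpow_pos_of_pos hx0 _), abs_of_pos (Real.rpow_pos_of_pos ht0 _)]
    have h1 : t ^ r₁ ≤ x ^ r₁ := Real.rpow_le_rpow_of_nonpos hx0 ht.1 hr.le
    have h2 : x ^ (-r₁) * x ^ r₁ = 1 := by rw [← Real.rpow_add hx0]; simp
    have h3 : x ^ (-r₁) * t ^ r₁ ≤ 1 := by
      rw [← h2]; exact mul_le_mul_of_nonneg_left h1 (by positivity)
    rw [mul_assoc]
    exact (mul_le_of_le_one_right (abs_nonneg y) h3).trans hyy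
  have hwa : |w| ≤ y₀ * x ^ (-r₁) := by
    rw [hw, abs_mul, abs_of_pos (Real.rpow_pos_of_pos hx0 _)]
    gcongr
  have hxL : (x ^ (-r₁)) ^ (n+1) = x ^ L := by
    rw [← Real.rpow_mul_natCast hx0.le]; congr 1; push_cast; ring
  have hwn : |w| ^ (n+1) ≤ y₀ ^ (n+1) * x ^ L := by
    rw [← hxL, ← mul_pow]
    gcongr
  -- the error term
  let E : ℝ → ℂ := fun t => ((t⁻¹ : ℝ) : ℂ) * F t (w * t ^ r₁) - 
    ∑ k ∈ Finset.range (n+1), ((w ^ k : ℝ) : ℂ) * h k t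
  have hsumint : IntervalIntegrable (fun t => ∑ k ∈ Finset.range (n+1), ((w ^ k : ℝ) : ℂ) * h k t) volume x x₀ := by
    have := IntervalIntegrable.sum (Finset.range (n+1)) (f := fun k t => ((w ^ k : ℝ) : ℂ) * h k t)
      (μ := volume) (a := x) (b := x₀) (fun k hk =>
      (hhi2 k (by have := Finset.mem_range.1 hk; omega) x hx).const_mul _)
    have e : (fun t => ∑ k ∈ Finset.range (n+1), ((w ^ k : ℝ) : ℂ) * h k t) =
        ∑ k ∈ Finset.range (n+1), (fun t => ((w ^ k : ℝ) : ℂ) * h k t) := by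
      ext t; simp only [Finset.sum_apply]
    rw [e]; exact this
  have hEint : ∫ t in x..x₀, E t = V x₀ (w * x₀ ^ r₁) - V x y - 
      ∑ k ∈ Finset.range (n+1), ((w ^ k : ℝ) : ℂ) * ∫ t in x..x₀, h k t := by
    simp only [E]
    rw [intervalIntegral.integral_sub (hint x hx y hyy) hsumint, hftc x hx y hyy,
      intervalIntegral.integral_finsetSum]
    · congr 1
      apply Finset.sum_congr rfl
      intro k _
      rw [intervalIntegral.integral_const_mul]
    · intro k hk
      exact (hhi2 k (by have := Finset.mem_range.1 hk; omega) x hx).const_mul _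
  have hEb : ∀ t ∈ Ioc x x₀, ‖E t‖ ≤ (C * y₀ ^ (n+1) * x₀ ^ (s - r') * x ^ L) * t ^ (r' - L - 1) := by
    intro t ht
    have ht0 : 0 < t := hx0.trans ht.1
    have e : E t = ((t⁻¹ : ℝ) : ℂ) * (F t (w * t ^ r₁) - 
        ∑ k ∈ Finset.range (n+1), (((w * t ^ r₁) ^ k : ℝ) : ℂ) * c k t) := by
      simp only [E, h]
      rw [mul_sub, Finset.mul_sum]
      congr 1
      apply Finset.sum_congr rfl
      intro k _
      push_cast; ring
    have hb := hFT t ⟨ht0, ht.2⟩ (w * t ^ r₁) (hwt t ⟨ht.1.le, ht.2⟩)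
    rw [abs_mul, abs_of_pos (Real.rpow_pos_of_pos ht0 r₁), mul_pow] at hb
    have ht1 : t ^ s ≤ x₀ ^ (s - r') * t ^ r' := aux_rpow_le ⟨ht0, ht.2⟩ hr2.le
    have e2 : t ^ (r' - L - 1) = t⁻¹ * (t ^ r' * (t ^ r₁) ^ (n+1)) := by
      rw [← Real.rpow_mul_natCast ht0.le, ← Real.rpow_neg_one t, ← Real.rpow_add ht0, ← Real.rpow_add ht0]
      congr 1; rw [hL]; push_cast; ring
    rw [e, norm_mul, Complex.norm_real, Real.norm_eq_abs, abs_of_pos (inv_pos.2 ht0), e2]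
    calc t⁻¹ * _ ≤ t⁻¹ * (C * t ^ s * (|w| ^ (n+1) * (t ^ r₁) ^ (n+1))) := by gcongr
      _ ≤ t⁻¹ * (C * (x₀ ^ (s - r') * t ^ r') * ((y₀ ^ (n+1) * x ^ L) * (t ^ r₁) ^ (n+1))) := by
        gcongr
      _ = _ := by ring
  have h0n : (0:ℝ) ∉ uIcc x x₀ := by
    rw [uIcc_of_le hx.2]; intro h0; linarith [h0.1]
  have hLr : 0 < L - r' := by linarith
  have hE : ‖∫ t in x..x₀, E t‖ ≤ C * y₀ ^ (n+1) * x₀ ^ (s - r') / (L - r') * x ^ r' := by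
    have := intervalIntegral.norm_integral_le_of_norm_le (μ := volume) (f := E) hx.2
      (g := fun t => (C * y₀ ^ (n+1) * x₀ ^ (s - r') * x ^ L) * t ^ (r' - L - 1))
      (ae_of_all _ hEb) ((intervalIntegral.intervalIntegrable_rpow (Or.inr h0n)).const_mul _)
    rw [intervalIntegral.integral_const_mul, integral_rpow (Or.inr ⟨by linarith, h0n⟩), sub_add_cancel] at this
    refine this.trans ?_
    have e3 : (x₀ ^ (r' - L) - x ^ (r' - L)) / (r' - L) ≤ x ^ (r' - L) / (L - r') := by
      rw [← neg_div_neg_eq, neg_sub, neg_sub]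
      gcongr
      linarith [Real.rpow_pos_of_pos hx₀ (r' - L)]
    have e4 : x ^ r' = x ^ L * x ^ (r' - L) := by rw [← Real.rpow_add hx0]; congr 1; ring
    rw [e4]
    calc _ ≤ C * y₀ ^ (n+1) * x₀ ^ (s - r') * x ^ L * (x ^ (r' - L) / (L - r')) := by gcongr
      _ = _ := by ring
  have hT1 := hVT (w * x₀ ^ r₁) (hwt x₀ ⟨hx.2, le_rfl⟩)
  have hT1' : D * |w * x₀ ^ r₁| ^ (n+1) ≤ D * (y₀ * x₀ ^ r₁) ^ (n+1) * x₀ ^ (L - r') * x ^ r' := by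
    rw [abs_mul, abs_of_pos (Real.rpow_pos_of_pos hx₀ r₁), mul_pow, mul_pow]
    have := aux_rpow_le hx hr1.le
    calc _ ≤ D * ((y₀ ^ (n+1) * (x₀ ^ (L - r') * x ^ r')) * (x₀ ^ r₁) ^ (n+1)) := by
          gcongr
          exact hwn.trans (by gcongr)
      _ = _ := by ring
  have hT2 : ‖∑ k ∈ Finset.range (n+1), ((w ^ k : ℝ) : ℂ) * ∫ t in (0:ℝ)..x, h k t‖ ≤
      (∑ k ∈ Finset.range (n+1), y₀ ^ k * C / (s + k * r₁) * x₀ ^ (s - r')) * x ^ r' := by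
    rw [Finset.sum_mul]
    apply norm_sum_le_of_le
    intro k hk
    have hk' : k ≤ n := by have := Finset.mem_range.1 hk; omega
    have hpos := hsk k hk'
    have hb := hh0 k hk' x hx
    have e : x ^ s = (x ^ (-r₁)) ^ k * x ^ (s + k * r₁) := by
      rw [← Real.rpow_mul_natCast hx0.le, ← Real.rpow_add hx0]; congr 1; ring
    have := aux_rpow_le hx hr2.le
    rw [norm_mul, Complex.norm_real, norm_pow, Real.norm_eq_abs]
    calc _ ≤ (y₀ * x ^ (-r₁)) ^ k * (C * (x ^ (s + k * r₁) / (s + k * r₁))) := by gcongr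
      _ = y₀ ^ k * C / (s + k * r₁) * x ^ s := by rw [e]; ring
      _ ≤ y₀ ^ k * C / (s + k * r₁) * (x₀ ^ (s - r') * x ^ r') := by gcongr
      _ = _ := by ring
  have hid : V x y - ∑ k ∈ Finset.range (n+1),
      (((x₀ ^ r₁) ^ k : ℝ) * d k - ∫ t in (0:ℝ)..x₀, h k t) * ((w ^ k : ℝ) : ℂ) =
      (V x₀ (w * x₀ ^ r₁) - ∑ k ∈ Finset.range (n+1), (((w * x₀ ^ r₁) ^ k : ℝ) : ℂ) * d k)
      + (∑ k ∈ Finset.range (n+1), ((w ^ k : ℝ) : ℂ) * ∫ t in (0:ℝ)..x, h k t)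
      - ∫ t in x..x₀, E t := by
    rw [hEint]
    have hsplit : ∑ k ∈ Finset.range (n+1),
      (((x₀ ^ r₁) ^ k : ℝ) * d k - ∫ t in (0:ℝ)..x₀, h k t) * ((w ^ k : ℝ) : ℂ) = 
      ∑ k ∈ Finset.range (n+1), (((w * x₀ ^ r₁) ^ k : ℝ) : ℂ) * d k 
      - ∑ k ∈ Finset.range (n+1), ((w ^ k : ℝ) : ℂ) * (∫ t in (0:ℝ)..x, h k t)
      - ∑ k ∈ Finset.range (n+1), ((w ^ k : ℝ) : ℂ) * ∫ t in x..x₀, h k t := by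
      rw [← Finset.sum_sub_distrib, ← Finset.sum_sub_distrib]
      apply Finset.sum_congr rfl
      intro k hk
      have hk' : k ≤ n := by have := Finset.mem_range.1 hk; omega
      rw [← intervalIntegral.integral_add_adjacent_intervals (hhi k hk' x hx) (hhi2 k hk' x hx)]
      push_cast; ring
    rw [hsplit]; ring
  rw [hid]
  refine (norm_sub_le _ _).trans ?_
  rw [add_mul, add_mul]
  refine add_le_add ((norm_add_le _ _).trans (add_le_add (hT1.trans hT1') hT2)) hE


/-- general-`n` part of the transport lemma at an outgoing
saddle. If `v` is smooth on `U = (0,x₀] × [−y₀,y₀]`, `f = x ∂ₓv + r₁ y ∂_y v`,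
and `|∂_y^k v| ≤ C x^ρ`, `|∂_y^k f| ≤ C x^s` for `0 ≤ k ≤ n+1`, with
`ρ > −(n−1)r₁` and `s > −n r₁`, then there is a constant `aₙ` with
`|v − aₙ x^{−n r₁} yⁿ| ≤ C′ x^{r′}` on `U` for every `r′ < min(−(n+1)r₁, s)`. -/
theorem stmt_16 (r₁ : ℝ) (hr : r₁ < 0) (n : ℕ) (x₀ y₀ : ℝ) (hx : 0 < x₀) (hy : 0 < y₀)
    (v f : ℝ × ℝ → ℂ) (Dv : ℝ × ℝ → (ℝ × ℝ →L[ℝ] ℂ))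
    (hdiff : ∀ p ∈ Set.Ioc (0 : ℝ) x₀ ×ˢ Set.Icc (-y₀) y₀, HasFDerivAt v (Dv p) p)
    (hcont : ContinuousOn Dv (Set.Ioc (0 : ℝ) x₀ ×ˢ Set.Icc (-y₀) y₀))
    (hysmooth : ∀ x ∈ Set.Ioc (0 : ℝ) x₀,
      ContDiff ℝ (⊤ : ℕ∞) (fun y => v (x, y)) ∧ ContDiff ℝ (⊤ : ℕ∞) (fun y => f (x, y)))
    (hfdef : ∀ p ∈ Set.Ioc (0 : ℝ) x₀ ×ˢ Set.Icc (-y₀) y₀,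
      f p = (p.1 : ℂ) * Dv p (1, 0) + (r₁ : ℂ) * (p.2 : ℂ) * Dv p (0, 1))
    (C ρ s : ℝ) (hC : 0 ≤ C)
    (hρ : -((n : ℝ) - 1) * r₁ < ρ) (hs : -(n : ℝ) * r₁ < s)
    (hbound : ∀ k ≤ n + 1, ∀ p ∈ Set.Ioc (0 : ℝ) x₀ ×ˢ Set.Icc (-y₀) y₀,
      ‖iteratedDeriv k (fun y => v (p.1, y)) p.2‖ ≤ C * p.1 ^ ρ ∧
      ‖iteratedDeriv k (fun y => f (p.1, y)) p.2‖ ≤ C * p.1 ^ s) :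
    ∃ a : ℂ, ∀ r' : ℝ, r' < min (-((n : ℝ) + 1) * r₁) s →
      ∃ C' : ℝ, 0 ≤ C' ∧
        ∀ p ∈ Set.Ioc (0 : ℝ) x₀ ×ˢ Set.Icc (-y₀) y₀,
          ‖v p - a * ((p.1 ^ (-(n : ℝ) * r₁) * p.2 ^ n : ℝ) : ℂ)‖ ≤ C' * p.1 ^ r' := by
  set U := Set.Ioc (0 : ℝ) x₀ ×ˢ Set.Icc (-y₀) y₀ with hU
  have hmem : ∀ {t y : ℝ}, t ∈ Ioc 0 x₀ → |y| ≤ y₀ → (t, y) ∈ U := fun ht hy' => ⟨ht, abs_le.1 hy'⟩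
  have hfc : ContinuousOn f U := by
    have h1 : ContinuousOn (fun p : ℝ × ℝ => (p.1 : ℂ) * Dv p (1, 0) + (r₁ : ℂ) * (p.2 : ℂ) * Dv p (0, 1)) U := by
      have ha : ContinuousOn (fun p => Dv p (1, 0)) U := hcont.clm_apply continuousOn_const
      have hb : ContinuousOn (fun p => Dv p (0, 1)) U := hcont.clm_apply continuousOn_const
      have hc : ContinuousOn (fun p : ℝ × ℝ => (p.1 : ℂ)) U := by fun_prop
      have hd : ContinuousOn (fun p : ℝ × ℝ => (r₁ : ℂ) * (p.2 : ℂ)) U := by fun_prop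
      exact (hc.mul ha).add (hd.mul hb)
    exact h1.congr hfdef
  let c : ℕ → ℝ → ℂ := fun k t => iteratedDeriv k (fun y => f (t, y)) 0 / (k.factorial : ℂ)
  let d : ℕ → ℂ := fun k => iteratedDeriv k (fun y => v (x₀, y)) 0 / (k.factorial : ℂ)
  have hT : ∀ k ≤ n, ∀ t ∈ Ioc 0 x₀, ∀ η, |η| ≤ y₀ →
      ‖f (t, η) - ∑ j ∈ Finset.range (k+1), ((η ^ j : ℝ) : ℂ) * c j t‖ ≤ C * t ^ s * |η| ^ (k+1) := by
    intro k hk t ht η hη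
    exact aux_taylor (fun y => f (t, y)) (hysmooth t ht).2 k (C * t ^ s) y₀
      (fun y hyy => (hbound (k+1) (by omega) (t, y) ⟨ht, hyy⟩).2) η hη
  have hx₀m : x₀ ∈ Ioc 0 x₀ := ⟨hx, le_rfl⟩
  have hcm := aux_meas (fun t y => f (t, y)) c n (Ioc 0 x₀) measurableSet_Ioc y₀ hy (fun t => C * t ^ s)
    (fun y hyy => hfc.comp (by fun_prop) (fun t ht => hmem ht hyy)) hT
  have hcurve : ∀ x ∈ Ioc 0 x₀, ∀ y, |y| ≤ y₀ → ∀ t ∈ Icc x x₀, (t, y * x ^ (-r₁) * t ^ r₁) ∈ U := by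
    intro x hx1 y hyy t ht
    have hx0 := hx1.1
    have ht0 : 0 < t := hx0.trans_le ht.1
    refine hmem ⟨ht0, ht.2⟩ ?_
    rw [abs_mul, abs_mul, abs_of_pos (Real.rpow_pos_of_pos hx0 _), abs_of_pos (Real.rpow_pos_of_pos ht0 _)]
    have h1 : t ^ r₁ ≤ x ^ r₁ := Real.rpow_le_rpow_of_nonpos hx0 ht.1 hr.le
    have h2 : x ^ (-r₁) * x ^ r₁ = 1 := by rw [← Real.rpow_add hx0]; simp
    have h3 : x ^ (-r₁) * t ^ r₁ ≤ 1 := by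
      rw [← h2]; exact mul_le_mul_of_nonneg_left h1 (by positivity)
    rw [mul_assoc]
    exact (mul_le_of_le_one_right (abs_nonneg y) h3).trans hyy
  have hint : ∀ x ∈ Ioc 0 x₀, ∀ y, |y| ≤ y₀ → IntervalIntegrable
      (fun t => ((t⁻¹ : ℝ) : ℂ) * f (t, y * x ^ (-r₁) * t ^ r₁)) volume x x₀ := by
    intro x hx1 y hyy
    apply ContinuousOn.intervalIntegrable
    rw [uIcc_of_le hx1.2]
    have hne : ∀ t ∈ Icc x x₀, t ≠ 0 := fun t ht => (hx1.1.trans_le ht.1).ne'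
    refine ContinuousOn.mul ?_ ?_
    · exact Complex.continuous_ofReal.comp_continuousOn (continuousOn_id.inv₀ hne)
    · refine hfc.comp ?_ (hcurve x hx1 y hyy)
      exact continuousOn_id.prodMk (continuousOn_const.mul
        (continuousOn_id.rpow_const (fun t ht => Or.inl (hne t ht))))
  have hftc : ∀ x ∈ Ioc 0 x₀, ∀ y, |y| ≤ y₀ →
      ∫ t in x..x₀, ((t⁻¹ : ℝ) : ℂ) * f (t, y * x ^ (-r₁) * t ^ r₁)
        = v (x₀, y * x ^ (-r₁) * x₀ ^ r₁) - v (x, y) := by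
    intro x hx1 y hyy
    have hx0 := hx1.1
    have h2 : y * x ^ (-r₁) * x ^ r₁ = y := by
      rw [mul_assoc, ← Real.rpow_add hx0]; simp
    have := intervalIntegral.integral_eq_sub_of_hasDerivAt
      (f := fun t => v (t, y * x ^ (-r₁) * t ^ r₁)) (a := x) (b := x₀) ?_ (hint x hx1 y hyy)
    · rw [this, h2]
    · intro t ht
      rw [uIcc_of_le hx1.2] at ht
      have ht0 : 0 < t := hx0.trans_le ht.1
      have hm := hcurve x hx1 y hyy t ht
      have hcd : HasDerivAt (fun t : ℝ => (t, y * x ^ (-r₁) * t ^ r₁))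
          (1, y * x ^ (-r₁) * (r₁ * t ^ (r₁ - 1))) t :=
        (hasDerivAt_id t).prodMk ((Real.hasDerivAt_rpow_const (Or.inl ht0.ne')).const_mul _)
      have hd := HasFDerivAt.comp_hasDerivAt t (hdiff _ hm) hcd
      refine hd.congr_deriv (Eq.symm ?_)
      rw [hfdef _ hm]
      set q := y * x ^ (-r₁) with hq
      have e : ((1 : ℝ), q * (r₁ * t ^ (r₁ - 1))) = (1, 0) + (q * (r₁ * t ^ (r₁ - 1))) • ((0:ℝ), (1:ℝ)) := by
        simp
      rw [e, map_add, map_smul, Complex.real_smul, Real.rpow_sub_one ht0.ne']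
      have htc : (t : ℂ) ≠ 0 := by exact_mod_cast ht0.ne'
      push_cast
      field_simp
  obtain ⟨a, ha⟩ := aux_expand r₁ n x₀ y₀ hr hx hy (fun x y => v (x, y)) (fun x y => f (x, y)) c d C
    (C * x₀ ^ ρ) s hC (by positivity) hs hcm
    (by
      intro k hk t ht
      have hb := (hbound k (by omega) (t, 0) (hmem ht (by simpa using hy.le))).2
      simp only [c]
      rw [norm_div, Complex.norm_natCast]
      exact (div_le_self (norm_nonneg _)
        (by exact_mod_cast Nat.succ_le_of_lt (Nat.factorial_pos k))).trans hb)
    (hT n le_rfl)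
    (fun η hη => aux_taylor (fun y => v (x₀, y)) (hysmooth x₀ hx₀m).1 n (C * x₀ ^ ρ) y₀
      (fun y hyy => (hbound (n+1) le_rfl (x₀, y) ⟨hx₀m, hyy⟩).1) η hη)
    hint hftc
  -- the lower coefficients vanish
  have hzero : ∀ k < n, a k = 0 := by
    obtain ⟨C', hC', hb⟩ := ha (-(n:ℝ) * r₁) (by linarith) hs
    have hl : 0 < -r₁ := by linarith
    set e₀ : ℝ := min ρ (-(n:ℝ) * r₁) with he₀
    have hkey := aux_poly n (fun k => a k * ((y₀ ^ k : ℝ) : ℂ)) (e₀ / (-r₁))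
      (C * x₀ ^ (ρ - e₀) + C' * x₀ ^ (-(n:ℝ) * r₁ - e₀) + ‖a n‖ * y₀ ^ n * x₀ ^ (-(n:ℝ) * r₁ - e₀))
      (x₀ ^ (-r₁))
      (by
        rw [lt_div_iff₀ hl, he₀, lt_min_iff]
        constructor <;> linarith)
      (by positivity)
      (by
        intro z hz
        set x : ℝ := z ^ ((-r₁)⁻¹) with hxdef
        have hx0 : 0 < x := Real.rpow_pos_of_pos hz.1 _
        have hzx : x ^ (-r₁) = z := by
          rw [hxdef, ← Real.rpow_mul hz.1.le, inv_mul_cancel₀ hl.ne', Real.rpow_one]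
        have hxx : x ≤ x₀ := by
          have := Real.rpow_le_rpow hz.1.le hz.2 (inv_pos.2 hl).le
          rwa [← Real.rpow_mul hx.le, mul_inv_cancel₀ hl.ne', Real.rpow_one] at this
        have hxm : x ∈ Ioc 0 x₀ := ⟨hx0, hxx⟩
        have hyabs : |y₀| ≤ y₀ := (abs_of_pos hy).le
        have h1 := hb x hxm y₀ hyabs
        have h2 := (hbound 0 (by omega) (x, y₀) (hmem hxm hyabs)).1
        simp only [iteratedDeriv_zero] at h2
        have hze : z ^ (e₀ / (-r₁)) = x ^ e₀ := by
          rw [hxdef, ← Real.rpow_mul hz.1.le]; congr 1; rw [div_eq_mul_inv, mul_comm]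
        have hzn : z ^ n = x ^ (-(n:ℝ) * r₁) := by
          rw [← hzx, ← Real.rpow_mul_natCast hx0.le]; congr 1; ring
        have i1 := aux_rpow_le hxm (min_le_left ρ (-(n:ℝ) * r₁))
        have i2 := aux_rpow_le hxm (min_le_right ρ (-(n:ℝ) * r₁))
        rw [← he₀] at i1 i2
        rw [Finset.sum_range_succ, hzx] at h1
        rw [hze]
        have hid : ∑ k ∈ Finset.range n, a k * ((y₀ ^ k : ℝ) : ℂ) * ((z ^ k : ℝ) : ℂ) =
            v (x, y₀) - (v (x, y₀) - (∑ k ∈ Finset.range n, a k * (((y₀ * z) ^ k : ℝ) : ℂ)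
              + a n * (((y₀ * z) ^ n : ℝ) : ℂ))) - a n * (((y₀ * z) ^ n : ℝ) : ℂ) := by
          have : ∑ k ∈ Finset.range n, a k * ((y₀ ^ k : ℝ) : ℂ) * ((z ^ k : ℝ) : ℂ) =
            ∑ k ∈ Finset.range n, a k * (((y₀ * z) ^ k : ℝ) : ℂ) := by
            apply Finset.sum_congr rfl; intro k _; push_cast; ring
          rw [this]; ring
        have h3 : ‖a n * (((y₀ * z) ^ n : ℝ) : ℂ)‖ = ‖a n‖ * y₀ ^ n * x ^ (-(n:ℝ) * r₁) := by
          have hz0 := hz.1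
          rw [norm_mul, Complex.norm_real, Real.norm_eq_abs, abs_of_pos (by positivity), mul_pow, hzn]
          ring
        rw [hid]
        refine (norm_sub_le _ _).trans ?_
        rw [h3, add_mul, add_mul]
        refine add_le_add ((norm_sub_le _ _).trans (add_le_add (h2.trans ?_) (h1.trans ?_))) ?_
        · rw [mul_assoc]; gcongr
        · rw [mul_assoc]; gcongr
        · rw [mul_assoc _ _ (x ^ e₀)]; gcongr)
    intro k hk
    have hne : ((y₀ ^ k : ℝ) : ℂ) ≠ 0 := by exact_mod_cast (pow_pos hy k).ne'
    exact (mul_eq_zero.1 (hkey k hk)).resolve_right hne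
  refine ⟨a n, fun r' hr' => ?_⟩
  obtain ⟨C', hC', hb⟩ := ha r' (lt_min_iff.1 hr').1 (lt_min_iff.1 hr').2
  refine ⟨C', hC', ?_⟩
  rintro ⟨x, y⟩ hp
  have h1 := hb x hp.1 y (abs_le.2 hp.2)
  have hx0 : 0 < x := hp.1.1
  rw [Finset.sum_range_succ, Finset.sum_eq_zero (fun k hk => by
    rw [hzero k (Finset.mem_range.1 hk), zero_mul]), zero_add] at h1
  have e : (y * x ^ (-r₁)) ^ n = x ^ (-(n:ℝ) * r₁) * y ^ n := by
    rw [mul_pow, ← Real.rpow_mul_natCast hx0.le, mul_comm]; congr 2; ring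
  rw [e] at h1
  exact h1
end

section
/- Let V : ℝ → ℝ be C^∞ and 2π-periodic with every critical point nondegenerate (V′(y) = 0 implies V″(y) ≠ 0). Fix λ ∈ ℝ and ν̃ > 0, and set K = {y ∈ ℝ : V(y) ≤ λ − ν̃²}. Then there exists a C^∞, 2π-periodic function Ṽ : ℝ → ℝ, all of whose critical points are nondegenerate, such that: (a) Ṽ and V have exactly the same local minimum points, and Ṽ coincides with V on a neighborhood of each local minimum point; (b) Ṽ(y) ≥ V(y) for all y; (c) Ṽ = V on K; and (d) no value of Ṽ at a local maximum point lies in the open interval (λ − ν̃², λ). -/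
/-- At a local maximum of a Morse function the second derivative is negative. -/
lemma aux_max_neg (V : ℝ → ℝ) (hV : ContDiff ℝ (⊤ : ℕ∞) V)
    (hMorse : ∀ y : ℝ, deriv V y = 0 → deriv (deriv V) y ≠ 0) {m : ℝ} (hm : IsLocalMax V m) :
    deriv (deriv V) m < 0 := by
  have h0 : deriv V m = 0 := hm.deriv_eq_zero
  rcases lt_or_gt_of_ne (hMorse m h0) with h | h
  · exact h
  exfalso
  have hmin : IsLocalMin V m :=
    isLocalMin_of_deriv_deriv_pos h h0 hV.continuous.continuousAt
  have hc : V =ᶠ[nhds m] fun _ => V m := by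
    filter_upwards [hm, hmin] with z h1 h2 using le_antisymm h1 h2
  have hd : deriv V =ᶠ[nhds m] fun _ => 0 := by
    filter_upwards [hc.eventuallyEq_nhds] with z hz
    rw [hz.deriv_eq]; simp
  have := hd.deriv_eq
  simp at this
  exact h.ne' this

/-- At a local minimum the second derivative is not negative. -/
lemma aux_min_not_neg (V : ℝ → ℝ) (hV : ContDiff ℝ (⊤ : ℕ∞) V)
    (hMorse : ∀ y : ℝ, deriv V y = 0 → deriv (deriv V) y ≠ 0) {m : ℝ} (hm : IsLocalMin V m) :
    ¬ deriv (deriv V) m < 0 := by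
  intro h
  have h0 : deriv V m = 0 := hm.deriv_eq_zero
  have hmax : IsLocalMax V m :=
    isLocalMax_of_deriv_deriv_neg h h0 hV.continuous.continuousAt
  have hc : V =ᶠ[nhds m] fun _ => V m := by
    filter_upwards [hm, hmax] with z h1 h2 using le_antisymm h2 h1
  have hd : deriv V =ᶠ[nhds m] fun _ => 0 := by
    filter_upwards [hc.eventuallyEq_nhds] with z hz
    rw [hz.deriv_eq]; simp
  have := hd.deriv_eq
  simp at this
  exact h.ne this

/-- The set of bad local maxima in one period. -/
def badSet (V : ℝ → ℝ) (c lam : ℝ) : Set ℝ :=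
  {m | m ∈ Set.Ico 0 (2 * Real.pi) ∧ IsLocalMax V m ∧ V m ∈ Set.Ioo c lam}

lemma contDiff_deriv_aux (V : ℝ → ℝ) (hV : ContDiff ℝ (⊤ : ℕ∞) V) :
    ContDiff ℝ (⊤ : ℕ∞) (deriv V) := by
  have h : ContDiff ℝ (((⊤ : ℕ∞) : WithTop ℕ∞) + 1) V := by simpa using hV
  exact (contDiff_succ_iff_deriv.1 h).2.2

lemma badSet_finite (V : ℝ → ℝ) (hV : ContDiff ℝ (⊤ : ℕ∞) V)
    (hMorse : ∀ y : ℝ, deriv V y = 0 → deriv (deriv V) y ≠ 0) (c lam : ℝ) :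
    (badSet V c lam).Finite := by
  have hV' := contDiff_deriv_aux V hV
  by_contra hinf
  obtain ⟨x, -, hx⟩ := Set.Infinite.exists_accPt_of_subset_isCompact hinf
    (isCompact_Icc (a := (0:ℝ)) (b := 2 * Real.pi)) (fun y hy => ⟨hy.1.1, hy.1.2.le⟩)
  rw [accPt_iff_frequently_nhdsNE] at hx
  have hx' : ∃ᶠ y in nhdsWithin x {x}ᶜ, deriv V y = 0 :=
    hx.mono (fun y hy => hy.2.1.deriv_eq_zero)
  have hx0 : deriv V x = 0 := by
    have hcl : IsClosed {y | deriv V y = 0} := isClosed_eq hV'.continuous continuous_const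
    exact hcl.mem_of_frequently_of_tendsto hx'
      (Filter.tendsto_id.mono_left nhdsWithin_le_nhds)
  have hd : HasDerivAt (deriv V) (deriv (deriv V) x) x :=
    (hV'.differentiable (by simp) x).hasDerivAt
  have := hd.eventually_ne (c := 0) (hMorse x hx0)
  exact hx' this

/-- If `cos δ ≤ cos x` with `0 < δ < π` then `x` is within `δ` of a multiple of `2π`. -/
lemma aux_cos {x δ : ℝ} (h0 : 0 < δ) (h1 : δ < Real.pi) (h : Real.cos δ ≤ Real.cos x) :
    ∃ k : ℤ, |x - k * (2 * Real.pi)| ≤ δ := by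
  have hp := Real.two_pi_pos
  refine ⟨round (x / (2 * Real.pi)), ?_⟩
  set k := round (x / (2 * Real.pi)) with hk
  have h2 := abs_sub_round (x / (2 * Real.pi))
  rw [← hk] at h2
  have h3 : |x - k * (2 * Real.pi)| ≤ Real.pi := by
    have : x - k * (2 * Real.pi) = (x / (2 * Real.pi) - k) * (2 * Real.pi) := by
      field_simp
    rw [this, abs_mul, abs_of_pos hp]
    nlinarith
  by_contra! h4
  have := Real.cos_lt_cos_of_nonneg_of_le_pi h0.le h3 h4
  rw [Real.cos_abs, Real.cos_sub_int_mul_two_pi] at this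
  linarith

/-- One step: remove one bad local maximum. -/
lemma aux_step (V : ℝ → ℝ) (hV : ContDiff ℝ (⊤ : ℕ∞) V)
    (hper : Function.Periodic V (2 * Real.pi))
    (hMorse : ∀ y : ℝ, deriv V y = 0 → deriv (deriv V) y ≠ 0)
    (c lam m : ℝ) (hm : IsLocalMax V m) (hc : c < V m) (hl : V m < lam) :
    ∃ W : ℝ → ℝ, ContDiff ℝ (⊤ : ℕ∞) W ∧ Function.Periodic W (2 * Real.pi) ∧
      (∀ y, V y ≤ W y) ∧ (∀ y, V y ≤ c → W y = V y) ∧ W m = lam ∧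
      (∀ y, IsLocalMin V y → ∀ᶠ z in nhds y, W z = V z) ∧
      (∀ y, deriv W y = 0 → (W =ᶠ[nhds y] V) ∨
        ((W =ᶠ[nhds y] fun z => V z + (lam - V m)) ∧ W y = lam)) := by
  have hV' := contDiff_deriv_aux V hV
  have hV'' := contDiff_deriv_aux _ hV'
  have hneg := aux_max_neg V hV hMorse hm
  have hm0 : deriv V m = 0 := hm.deriv_eq_zero
  have hperk : ∀ (k : ℤ) y, V (y - k * (2 * Real.pi)) = V y := fun k y =>
    hper.sub_int_mul_eq k
  have hderk : ∀ (k : ℤ) y, deriv V (y - k * (2 * Real.pi)) = deriv V y := fun k y => by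
    rw [← deriv_comp_sub_const]
    congr 1; funext z; exact hperk k z
  have hder2k : ∀ (k : ℤ) y, deriv (deriv V) (y - k * (2 * Real.pi)) = deriv (deriv V) y :=
    fun k y => by
    rw [← deriv_comp_sub_const]
    congr 1; funext z; exact hderk k z
  obtain ⟨δ, hδ0, hδπ, hδ⟩ : ∃ δ, 0 < δ ∧ δ < Real.pi ∧
      ∀ y, |y - m| ≤ δ → deriv (deriv V) y < 0 ∧ c < V y := by
    have he : ∀ᶠ y in nhds m, deriv (deriv V) y < 0 ∧ c < V y :=
      (hV''.continuous.continuousAt.eventually_lt continuousAt_const hneg).and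
        (continuousAt_const.eventually_lt hV.continuous.continuousAt hc)
    obtain ⟨ε, hε, h⟩ := Metric.eventually_nhds_iff.1 he
    have := Real.pi_pos
    refine ⟨min ε Real.pi / 2, by positivity, ?_, fun y hy => h ?_⟩
    · have := min_le_right ε Real.pi; linarith
    · have := min_le_left ε Real.pi; rw [Real.dist_eq]; linarith
  have hanti : StrictAntiOn (deriv V) (Set.Icc (m - δ) (m + δ)) := by
    refine strictAntiOn_of_deriv_neg (convex_Icc _ _) hV'.continuous.continuousOn ?_
    intro x hx
    rw [interior_Icc] at hx
    exact (hδ x (abs_le.2 ⟨by linarith [hx.1], by linarith [hx.2]⟩)).1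
  have hcos1 : Real.cos δ < 1 := by
    have := Real.cos_lt_cos_of_nonneg_of_le_pi le_rfl hδπ.le hδ0
    simpa using this
  obtain ⟨r, hr0, hr⟩ : ∃ r, 0 < r ∧ 2 * r = 1 - Real.cos δ :=
    ⟨(1 - Real.cos δ) / 2, by linarith, by ring⟩
  obtain ⟨t, ht0, ht⟩ : ∃ t, 0 < t ∧ t = lam - V m := ⟨_, by linarith, rfl⟩
  let g : ℝ → ℝ := fun y => 2 - (1 - Real.cos (y - m)) / r
  let ψ : ℝ → ℝ := fun y => Real.smoothTransition (g y)
  have hgc : ContDiff ℝ (⊤ : ℕ∞) g := by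
    have : ContDiff ℝ (⊤ : ℕ∞) (fun y => Real.cos (y - m)) :=
      Real.contDiff_cos.comp (contDiff_id.sub contDiff_const)
    exact contDiff_const.sub ((contDiff_const.sub this).div_const r)
  have hψc : ContDiff ℝ (⊤ : ℕ∞) ψ := Real.smoothTransition.contDiff.comp hgc
  have hgd : ∀ y, HasDerivAt g (- (Real.sin (y - m) / r)) y := by
    intro y
    have h1 : HasDerivAt (fun y => Real.cos (y - m)) (- Real.sin (y - m) * 1) y :=
      ((hasDerivAt_id y).sub_const m).cos
    have := ((h1.const_sub 1).div_const r).const_sub 2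
    exact this.congr_deriv (by ring)
  have hsT : ∀ x, 0 ≤ deriv Real.smoothTransition x := fun x =>
    Real.smoothTransition.monotone.deriv_nonneg
  have hψd : ∀ y, HasDerivAt ψ
      (deriv Real.smoothTransition (g y) * (- (Real.sin (y - m) / r))) y := by
    intro y
    have h1 : HasDerivAt Real.smoothTransition (deriv Real.smoothTransition (g y)) (g y) :=
      ((Real.smoothTransition.contDiff (n := 1)).differentiable (by simp) _).hasDerivAt
    exact h1.comp y (hgd y)
  have hzero : ∀ y, Real.cos (y - m) < Real.cos δ → ψ y = 0 := by
    intro y hy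
    apply Real.smoothTransition.zero_of_nonpos
    have : 2 ≤ (1 - Real.cos (y - m)) / r := by
      rw [le_div_iff₀ hr0]; linarith
    simp only [g]; linarith
  have hzero' : ∀ y, Real.cos (y - m) < Real.cos δ → ∀ᶠ z in nhds y, ψ z = 0 := by
    intro y hy
    have hco : Continuous fun z => Real.cos (z - m) := by fun_prop
    filter_upwards [hco.continuousAt.eventually_lt continuousAt_const hy] with z hz
      using hzero z hz
  have hnear : ∀ y, Real.cos δ ≤ Real.cos (y - m) →
      ∃ k : ℤ, |(y - k * (2 * Real.pi)) - m| ≤ δ := by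
    intro y hy
    obtain ⟨k, hk⟩ := aux_cos hδ0 hδπ hy
    exact ⟨k, by convert hk using 2; ring⟩
  have hψ0 : ∀ y, 0 ≤ ψ y := fun y => Real.smoothTransition.nonneg _
  have hWd : ∀ y, HasDerivAt (fun z => V z + t * ψ z) (deriv V y +
      t * (deriv Real.smoothTransition (g y) * (- (Real.sin (y - m) / r)))) y := fun y =>
    ((hV.differentiable (by simp) y).hasDerivAt).add ((hψd y).const_mul t)
  have hgm : g m = 2 := by simp [g]
  have hψm : ψ m = 1 := Real.smoothTransition.one_of_one_le (by rw [hgm]; norm_num)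
  have hgper : Function.Periodic g (2 * Real.pi) := by
    intro y
    simp only [g]
    rw [show y + 2 * Real.pi - m = (y - m) + 2 * Real.pi by ring, Real.cos_add_two_pi]
  refine ⟨fun y => V y + t * ψ y, hV.add (contDiff_const.mul hψc), ?_, ?_, ?_, ?_, ?_, ?_⟩
  · intro y
    simp only [ψ]
    rw [hper y, hgper y]
  · intro y
    have := mul_nonneg ht0.le (hψ0 y)
    simp only; linarith
  · intro y hy
    have : ψ y = 0 := by
      apply hzero
      by_contra! h
      obtain ⟨k, hk⟩ := hnear y h
      have := (hδ _ hk).2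
      rw [hperk] at this
      linarith
    simp [this]
  · simp only [hψm, ht]; ring
  · intro y hy
    have : Real.cos (y - m) < Real.cos δ := by
      by_contra! h
      obtain ⟨k, hk⟩ := hnear y h
      have h2 := (hδ _ hk).1
      rw [hder2k] at h2
      exact aux_min_not_neg V hV hMorse hy h2
    filter_upwards [hzero' y this] with z hz
    simp [hz]
  · intro y hy
    rw [(hWd y).deriv] at hy
    rcases lt_or_ge (Real.cos (y - m)) (Real.cos δ) with h | h
    · left
      filter_upwards [hzero' y h] with z hz
      simp [hz]
    right
    obtain ⟨k, hk⟩ := hnear y h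
    obtain ⟨x, hx⟩ : ∃ x, x = y - k * (2 * Real.pi) := ⟨_, rfl⟩
    rw [← hx] at hk
    have hdx : deriv V x = deriv V y := by rw [hx, hderk]
    have hsx : Real.sin (x - m) = Real.sin (y - m) := by
      rw [hx, show y - k * (2 * Real.pi) - m = (y - m) - k * (2 * Real.pi) by ring,
        Real.sin_sub_int_mul_two_pi]
    rw [← hdx, ← hsx] at hy
    have hk' := abs_le.1 hk
    have hxI : x ∈ Set.Icc (m - δ) (m + δ) := ⟨by linarith, by linarith⟩
    have hmI : m ∈ Set.Icc (m - δ) (m + δ) := ⟨by linarith, by linarith⟩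
    have hxm : x = m := by
      rcases lt_trichotomy x m with h1 | h1 | h1
      · exfalso
        have h2 := hanti hxI hmI h1
        rw [hm0] at h2
        have h3 : Real.sin (x - m) < 0 :=
          Real.sin_neg_of_neg_of_neg_pi_lt (by linarith) (by linarith)
        have h4 : 0 ≤ - (Real.sin (x - m) / r) := by
          have := div_neg_of_neg_of_pos h3 hr0; linarith
        have := mul_nonneg ht0.le (mul_nonneg (hsT (g y)) h4)
        linarith
      · exact h1
      · exfalso
        have h2 := hanti hmI hxI h1
        rw [hm0] at h2
        have h3 : 0 < Real.sin (x - m) :=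
          Real.sin_pos_of_pos_of_lt_pi (by linarith) (by linarith)
        have h4 : 0 ≤ (Real.sin (x - m) / r) := by positivity
        have := mul_nonneg ht0.le (mul_nonneg (hsT (g y)) h4)
        linarith
    have hgy : g y = 2 := by
      have := hgper.sub_int_mul_eq (x := y) k
      rw [← hx, hxm, hgm] at this
      exact this.symm
    have hVy : V y = V m := by rw [← hxm, hx, hperk]
    have hev : ∀ᶠ z in nhds y, ψ z = 1 := by
      have : ∀ᶠ z in nhds y, 1 < g z :=
        continuousAt_const.eventually_lt hgc.continuous.continuousAt (by rw [hgy]; norm_num)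
      filter_upwards [this] with z hz using Real.smoothTransition.one_of_one_le hz.le
    refine ⟨?_, ?_⟩
    · filter_upwards [hev] with z hz
      simp [hz, ht]
    · simp only [hev.self_of_nhds, hVy, ht]; ring

/-- potential-modification lemma. For a smooth 2π-periodic Morse
function `V`, energy `λ` and `ν̃ > 0`, there is a smooth 2π-periodic Morse
function `Ṽ` with the same local minima as `V` (agreeing with `V` near them),
`Ṽ ≥ V`, `Ṽ = V` on `K = {V ≤ λ − ν̃²}`, and no local maximum value of `Ṽ`
in `(λ − ν̃², λ)`. -/
theorem stmt_18 (V : ℝ → ℝ) (hV : ContDiff ℝ (⊤ : ℕ∞) V)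
    (hper : Function.Periodic V (2 * Real.pi))
    (hMorse : ∀ y : ℝ, deriv V y = 0 → deriv (deriv V) y ≠ 0)
    (lam ν : ℝ) (hν : 0 < ν) :
    ∃ Vt : ℝ → ℝ, ContDiff ℝ (⊤ : ℕ∞) Vt ∧ Function.Periodic Vt (2 * Real.pi) ∧
      (∀ y : ℝ, deriv Vt y = 0 → deriv (deriv Vt) y ≠ 0) ∧
      (∀ y : ℝ, IsLocalMin Vt y ↔ IsLocalMin V y) ∧
      (∀ y : ℝ, IsLocalMin V y → ∀ᶠ z in nhds y, Vt z = V z) ∧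
      (∀ y : ℝ, V y ≤ Vt y) ∧
      (∀ y : ℝ, V y ≤ lam - ν ^ 2 → Vt y = V y) ∧
      (∀ y : ℝ, IsLocalMax Vt y → Vt y ∉ Set.Ioo (lam - ν ^ 2) lam) := by
  obtain ⟨n, hn⟩ : ∃ n, n = (badSet V (lam - ν ^ 2) lam).ncard := ⟨_, rfl⟩
  induction n using Nat.strong_induction_on generalizing V with
  | _ n ih =>
  by_cases hbad : ∃ m, m ∈ badSet V (lam - ν ^ 2) lam
  · obtain ⟨m, hm⟩ := hbad
    obtain ⟨W, hW, hWper, hVW, hWK, hWm, hWmin, hWcrit⟩ :=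
      aux_step V hV hper hMorse (lam - ν ^ 2) lam m hm.2.1 hm.2.2.1 hm.2.2.2
    have hWMorse : ∀ y : ℝ, deriv W y = 0 → deriv (deriv W) y ≠ 0 := by
      intro y hy
      rcases hWcrit y hy with h | ⟨h, -⟩
      · rw [h.deriv.deriv_eq]
        exact hMorse y (by rw [← h.deriv_eq, hy])
      · have h1 : deriv W =ᶠ[nhds y] deriv V := by
          filter_upwards [h.deriv] with z hz
          rw [hz, deriv_add_const]
        rw [h1.deriv_eq]
        exact hMorse y (by rw [← h1.self_of_nhds, hy])
    have hmin : ∀ y, IsLocalMin W y ↔ IsLocalMin V y := by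
      intro y
      constructor
      · intro hy
        rcases hWcrit y hy.deriv_eq_zero with h | ⟨h, -⟩
        · exact hy.congr h
        · have h2 := h.self_of_nhds
          filter_upwards [hy, h] with z hz hz'
          simp only at h2
          linarith
      · intro hy
        exact hy.congr ((hWmin y hy).mono fun z hz => hz.symm)
    have hsub : badSet W (lam - ν ^ 2) lam ⊂ badSet V (lam - ν ^ 2) lam := by
      refine (Set.ssubset_iff_of_subset ?_).2 ⟨m, hm, fun h => ?_⟩
      · intro y hy
        rcases hWcrit y hy.2.1.deriv_eq_zero with h | ⟨-, h⟩
        · refine ⟨hy.1, hy.2.1.congr h, ?_⟩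
          rw [← h.self_of_nhds]; exact hy.2.2
        · exact absurd h hy.2.2.2.ne
      · exact h.2.2.2.ne hWm
    have hlt := Set.ncard_lt_ncard hsub (badSet_finite V hV hMorse _ _)
    rw [← hn] at hlt
    obtain ⟨U, hU, hUper, hUMorse, hUmin, hUnear, hUge, hUK, hUmax⟩ :=
      ih _ hlt W hW hWper hWMorse rfl
    refine ⟨U, hU, hUper, hUMorse, fun y => (hUmin y).trans (hmin y), ?_,
      fun y => (hVW y).trans (hUge y), ?_, hUmax⟩
    · intro y hy
      filter_upwards [hUnear y ((hmin y).2 hy), hWmin y hy] with z h1 h2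
      rw [h1, h2]
    · intro y hy
      have h1 := hWK y hy
      rw [hUK y (by rw [h1]; exact hy), h1]
  · refine ⟨V, hV, hper, hMorse, fun y => Iff.rfl, fun y _ => Filter.Eventually.of_forall
      fun _ => rfl, fun y => le_rfl, fun _ _ => rfl, ?_⟩
    intro y hy hyI
    apply hbad
    obtain ⟨k, hk, -⟩ := existsUnique_add_zsmul_mem_Ico Real.two_pi_pos y 0
    simp only [zero_add, zsmul_eq_mul] at hk
    have hp : ∀ z, V (z - k * (2 * Real.pi)) = V z := fun z => hper.sub_int_mul_eq k
    have hp' : V (y + k * (2 * Real.pi)) = V y := by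
      rw [← hp, add_sub_cancel_right]
    refine ⟨y + k * (2 * Real.pi), hk, ?_, by rw [hp']; exact hyI⟩
    have ht : Filter.Tendsto (fun z => z - k * (2 * Real.pi))
        (nhds (y + k * (2 * Real.pi))) (nhds y) := by
      have : Continuous fun z : ℝ => z - k * (2 * Real.pi) := by fun_prop
      have h := this.tendsto (y + k * (2 * Real.pi))
      rwa [add_sub_cancel_right] at h
    filter_upwards [ht.eventually hy] with z hz
    rw [hp', ← hp z]
    exact hz
end
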